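/- Let p be an odd prime, q = p^{2e}, and let n satisfy 1 ≤ n ≤ q and p ∤ n. The number of n-element subsets {x_1,...,x_n} of F_q satisfying x_1 + ... + x_n = 0 and x_1^2 + ... + x_n^2 = 0 equals (1/q^2) C(q,n) + ((q-1)/(2 q^{3/2})) (α(n) - (-1)^n β(n)), where α(n) = Σ_{i+pj=n, 0≤i≤√q} C(√q, i) C((q-√q)/p, j) and β(n) = Σ_{i+pj=n, i≥0} (-1)^j C(√q-1+i, √q-1) C((q+√q)/p, j). -/

import Mathlib

/-!
Let `ψ` be a nontrivial additive character of `F`, and write `eₙ(v)` for the `n`-th elementary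
symmetric function of a family `v`. Orthogonality of characters expresses `q²` times the number of
subsets as `∑_{a, b} eₙ(x ↦ ψ(ax² + bx))`. Because `p ∤ n`, translating `x` shows that only `b = 0`
contributes for `a = 0`, and completing the square turns the sum over `b` for fixed `a ≠ 0` into a
Gauss sum times `eₙ(x ↦ ψ(ax²))`. Since `q` is an even power of `p`, the Gauss sums `∑ₓ ψ(ax²)` are
`±√q`, and in particular integers. As the `p`-th cyclotomic polynomial is irreducible, a family of
`k` many `p`-th roots of unity with integer sum `t` contains all nontrivial roots equally often, so
its elementary symmetric functions are the coefficients of `(1 + X)ᵗ (1 + Xᵖ)^((k - t) / p)`. For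
`t = √q` and `t = -√q` these are `α(n)` and `(-1)ⁿ β(n)`, and each sign occurs for half of the
`a ≠ 0`.
-/

open Finset PowerSeries

section ElementarySymmetric

variable {ι R : Type*} [Fintype ι] [CommSemiring R]

/-- The generating function `∏ₓ (1 + f(x) X)` of the elementary symmetric functions of a finite
family. -/
noncomputable def esymmSeries (f : ι → R) : R⟦X⟧ :=
  ∏ x, (1 + C (f x) * X)

lemma coeff_esymmSeries (f : ι → R) (n : ℕ) :
    coeff n (esymmSeries f) = ∑ S ∈ powersetCard n univ, ∏ x ∈ S, f x := by
  classical
  rw [esymmSeries, prod_one_add, map_sum, powersetCard_eq_filter, sum_filter]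
  refine sum_congr rfl fun S _ => ?_
  rw [prod_mul_distrib, prod_const, ← map_prod, coeff_C_mul, coeff_X_pow, mul_ite, mul_one,
    mul_zero]
  simp only [eq_comm]

lemma esymmSeries_one : esymmSeries (fun _ : ι => (1 : R)) = (1 + X) ^ Fintype.card ι := by
  simp [esymmSeries]

lemma esymmSeries_const_mul_comp_equiv (c : R) (f : ι → R) (σ : ι ≃ ι) :
    esymmSeries (fun x => c * f (σ x)) = rescale c (esymmSeries f) := by
  rw [esymmSeries, esymmSeries, map_prod, ← σ.prod_comp fun x => rescale c (1 + C (f x) * X)]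
  refine prod_congr rfl fun x _ => ?_
  ext i
  simp only [coeff_rescale, map_add, coeff_C_mul, coeff_one, coeff_X]
  rcases i with _ | _ | i <;> simp

end ElementarySymmetric

section BinomialCoefficients

variable {R : Type*} [CommRing R]

lemma coeff_one_add_X_pow (N n : ℕ) : coeff n ((1 + X : R⟦X⟧) ^ N) = N.choose n := by
  rw [← binomialSeries_nat (R := ℤ), binomialSeries_coeff, Ring.choose_natCast, zsmul_one,
    Int.cast_natCast]

lemma coeff_one_add_X_pow_pow {p : ℕ} (hp : p ≠ 0) (N m : ℕ) :
    coeff m ((1 + X ^ p : R⟦X⟧) ^ N) = if p ∣ m then (N.choose (m / p) : R) else 0 := by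
  rw [← expand_X p hp, ← map_one (expand p hp), ← map_add, ← map_pow, coeff_expand,
    coeff_one_add_X_pow]

lemma coeff_mul_one_add_X_pow_pow {p : ℕ} (hp : p ≠ 0) (f : R⟦X⟧) (N n : ℕ) :
    coeff n (f * (1 + X ^ p) ^ N) =
      ∑ ij ∈ range (n + 1) ×ˢ range (n + 1) with ij.1 + p * ij.2 = n,
        coeff ij.1 f * N.choose ij.2 := by
  simp only [coeff_mul, coeff_one_add_X_pow_pow hp, mul_ite, mul_zero]
  rw [← sum_filter]
  refine sum_nbij' (fun im => (im.1, im.2 / p)) (fun ij => (ij.1, p * ij.2)) ?_ ?_ ?_ ?_ ?_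
  · rintro ⟨i, m⟩ h
    obtain ⟨rfl, k, rfl⟩ : i + m = n ∧ p ∣ m := by simpa using h
    have : k ≤ p * k := Nat.le_mul_of_pos_left k hp.pos
    simp only [mem_filter, mem_product, mem_range, Nat.mul_div_cancel_left k hp.pos, and_true]
    exact ⟨by omega, by omega⟩
  · rintro ⟨i, j⟩ h
    simpa using (mem_filter.1 h).2
  · rintro ⟨i, m⟩ h
    simp [Nat.mul_div_cancel' (mem_filter.1 h).2]
  · simp [hp.pos]
  · simp

lemma choose_neg_natCast {s : ℕ} (hs : 0 < s) (i : ℕ) :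
    Ring.choose (-s : ℤ) i = (-1) ^ i * (s - 1 + i).choose (s - 1) := by
  obtain ⟨d, rfl⟩ := Nat.exists_eq_add_of_le' hs
  rw [Ring.choose_neg, show ((d + 1 : ℕ) : ℤ) + i - 1 = (d + i : ℕ) by push_cast; ring,
    Ring.choose_natCast, Nat.add_sub_cancel, Nat.choose_symm_add, Units.smul_def, smul_eq_mul,
    Int.coe_negOnePow_natCast]

end BinomialCoefficients

section RootsOfUnity

/-- The value of the `n`-th elementary symmetric function on `k` many `p`-th roots of unity whose
sum is the integer `t`, for an odd prime `p`: the coefficient of `Xⁿ` in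
`(1 + X)ᵗ (1 + Xᵖ)^((k - t) / p)`. For such a family `p ∣ k - t` and `0 ≤ k - t`, so neither the
integer division nor `toNat` loses information. -/
noncomputable def rootsEsymm (p k n : ℕ) (t : ℤ) : ℤ :=
  coeff n (binomialSeries ℤ t * (1 + X ^ p) ^ ((k - t) / p).toNat)

lemma rootsEsymm_natCast {p : ℕ} (hp : p ≠ 0) {k s : ℕ} (hsk : s ≤ k) (n : ℕ) :
    rootsEsymm p k n s =
      ∑ ij ∈ range (n + 1) ×ˢ range (n + 1) with ij.1 + p * ij.2 = n ∧ ij.1 ≤ s,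
        (s.choose ij.1 * ((k - s) / p).choose ij.2 : ℤ) := by
  have hN : (((k : ℤ) - s) / p).toNat = (k - s) / p := by
    rw [← Nat.cast_sub hsk, ← Int.natCast_div, Int.toNat_natCast]
  rw [rootsEsymm, hN, coeff_mul_one_add_X_pow_pow hp, ← filter_filter,
    sum_filter (fun ij : ℕ × ℕ => ij.1 ≤ s)]
  refine sum_congr rfl fun ij _ => ?_
  rw [binomialSeries_coeff, Ring.choose_natCast, smul_eq_mul, mul_one]
  split_ifs with his
  · rfl
  · rw [Nat.choose_eq_zero_of_lt (not_le.1 his), Nat.cast_zero, zero_mul]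

lemma rootsEsymm_neg_natCast {p : ℕ} (hp : Odd p) {s : ℕ} (hs : 0 < s) (k n : ℕ) :
    rootsEsymm p k n (-s) =
      (-1) ^ n * ∑ ij ∈ range (n + 1) ×ˢ range (n + 1) with ij.1 + p * ij.2 = n,
        ((-1) ^ ij.2 * (s - 1 + ij.1).choose (s - 1) * ((k + s) / p).choose ij.2 : ℤ) := by
  have hN : (((k : ℤ) - -s) / p).toNat = (k + s) / p := by
    rw [sub_neg_eq_add, ← Nat.cast_add, ← Int.natCast_div, Int.toNat_natCast]
  rw [rootsEsymm, hN, coeff_mul_one_add_X_pow_pow hp.pos.ne', mul_sum]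
  refine sum_congr rfl fun ij hij => ?_
  have sign : (-1 : ℤ) ^ ij.1 = (-1) ^ n * (-1) ^ ij.2 := by
    rw [← (mem_filter.1 hij).2, pow_add, pow_mul, hp.neg_one_pow, mul_assoc, ← mul_pow]
    simp
  rw [binomialSeries_coeff, choose_neg_natCast hs, smul_eq_mul, sign]
  ring

lemma map_binomialSeries {R : Type*} [CommRing R] (t : ℤ) :
    PowerSeries.map (Int.castRingHom R) (binomialSeries ℤ t) = binomialSeries R t := by
  ext i
  simp

lemma intCast_rootsEsymm (R : Type*) [CommRing R] (p k n : ℕ) (t : ℤ) :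
    (rootsEsymm p k n t : R) =
      coeff n (binomialSeries R t * (1 + X ^ p) ^ ((k - t) / p).toNat) := by
  rw [rootsEsymm, ← eq_intCast (Int.castRingHom R), ← coeff_map, map_mul, map_binomialSeries]
  simp

lemma pow_add_pow_eq_prod_fin {R : Type*} [CommRing R] [IsDomain R] {ζ : R} {m : ℕ}
    (hζ : IsPrimitiveRoot ζ m) (hm : Odd m) (x y : R) :
    x ^ m + y ^ m = ∏ j : Fin m, (x + ζ ^ (j : ℕ) * y) := by
  classical
  rw [hζ.pow_add_pow_eq_prod_add_mul x y hm, Polynomial.nthRootsFinset_def,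
    hζ.nthRoots_eq (one_pow m), Fin.prod_univ_eq_prod_range fun j => x + ζ ^ j * y]
  simp only [mul_one]
  rw [← Finset.image_toFinset, Multiset.toFinset_range, prod_image]
  simpa using hζ.injOn_pow

variable {ι K : Type*} [Fintype ι] [Field K] [CharZero K] {p : ℕ} {ζ : K}

lemma exists_card_fiber_eq_add_ite (hp : p.Prime) (hζ : IsPrimitiveRoot ζ p) {k : ι → Fin p}
    {t : ℤ} (ht : ∑ x, ζ ^ (k x : ℕ) = t) :
    ∃ N : ℕ, ∀ j, (#{x | k x = j} : ℤ) = N + if (j : ℕ) = 0 then t else 0 := by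
  have hfiber : ∑ j, (#{x | k x = j} : K) * ζ ^ (j : ℕ) = t := by
    rw [← ht, ← sum_fiberwise' univ k fun j => ζ ^ (j : ℕ)]
    simp only [sum_const, nsmul_eq_mul]
  have hzero :
      ∑ j, ((#{x | k x = j} - if (j : ℕ) = 0 then t else 0 : ℤ) : K) * ζ ^ (j : ℕ) = 0 := by
    have : NeZero p := ⟨hp.ne_zero⟩
    simp [sub_mul, hfiber, ite_mul, Fin.val_eq_zero_iff]
  have hconst := (hζ.sum_eq_zero_iff_forall_eq_int hp _).1 hzero
  refine ⟨#{x | k x = ⟨1, hp.one_lt⟩}, fun j => ?_⟩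
  rw [← sub_eq_iff_eq_add, hconst j ⟨1, hp.one_lt⟩, if_neg one_ne_zero, sub_zero]

lemma esymmSeries_primitiveRoot_pow (hp : p.Prime) (hodd : Odd p) (hζ : IsPrimitiveRoot ζ p)
    {k : ι → Fin p} {t : ℤ} (ht : ∑ x, ζ ^ (k x : ℕ) = t) :
    esymmSeries (fun x => ζ ^ (k x : ℕ)) =
      binomialSeries K t * (1 + X ^ p) ^ ((Fintype.card ι - t) / p).toNat := by
  have : NeZero p := ⟨hp.ne_zero⟩
  obtain ⟨N, hN⟩ := exists_card_fiber_eq_add_ite hp hζ ht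
  have hcard : (Fintype.card ι : ℤ) = p * N + t := by
    rw [← card_univ, card_eq_sum_card_fiberwise (f := k) (t := univ) (by simp), Nat.cast_sum]
    simp [hN, sum_add_distrib, Fin.val_eq_zero_iff]
  have hexp : ((Fintype.card ι - t) / p).toNat = N := by
    rw [hcard, add_sub_cancel_right, Int.mul_ediv_cancel_left _ (mod_cast hp.ne_zero),
      Int.toNat_natCast]
  have hfactor (j : Fin p) : (1 + C (ζ ^ (j : ℕ)) * X : K⟦X⟧) ^ #{x | k x = j} =
      (if (j : ℕ) = 0 then binomialSeries K t else 1) * (1 + C (ζ ^ (j : ℕ)) * X) ^ N := by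
    split_ifs with hj
    · have hNj := hN j
      rw [if_pos hj] at hNj
      rw [hj, pow_zero, map_one, one_mul, ← binomialSeries_nat (R := ℤ), hNj, add_comm,
        binomialSeries_add, binomialSeries_nat]
    · have hNj := hN j
      rw [if_neg hj, add_zero, Nat.cast_inj] at hNj
      rw [hNj, one_mul]
  have hroots := pow_add_pow_eq_prod_fin
    (hζ.map_of_injective (C_injective : Function.Injective (C : K →+* K⟦X⟧))) hodd 1 X
  simp only [one_pow, ← map_pow] at hroots
  rw [esymmSeries, ← prod_fiberwise' univ k fun j => 1 + C (ζ ^ (j : ℕ)) * X]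
  simp only [prod_const, hfactor, prod_mul_distrib, hexp, prod_pow, ← hroots, Fin.val_eq_zero_iff,
    prod_ite_eq', mem_univ, if_true]

lemma coeff_esymmSeries_of_pow_eq_one (hp : p.Prime) (hodd : Odd p) (hζ : IsPrimitiveRoot ζ p)
    {v : ι → K} (hv : ∀ x, v x ^ p = 1) {t : ℤ} (ht : ∑ x, v x = t) (n : ℕ) :
    coeff n (esymmSeries v) = rootsEsymm p (Fintype.card ι) n t := by
  have : NeZero p := ⟨hp.ne_zero⟩
  choose k hkp hk using fun x => hζ.eq_pow_of_pow_eq_one (hv x)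
  obtain rfl : (fun x => ζ ^ k x) = v := funext hk
  rw [intCast_rootsEsymm,
    ← esymmSeries_primitiveRoot_pow hp hodd hζ (k := fun x => ⟨k x, hkp x⟩) ht]

end RootsOfUnity

section AdditiveCharacters

variable {R : Type*} [CommRing R]

lemma coeff_esymmSeries_addChar_eq_zero [IsDomain R] {A : Type*} [AddGroup A] [Fintype A]
    {ψ : AddChar A R} {n : ℕ} (hψ : ψ ^ n ≠ 1) : coeff n (esymmSeries ψ) = 0 := by
  obtain ⟨y, hy⟩ := AddChar.ne_one_iff.1 hψ
  have translate : coeff n (esymmSeries ψ) = ψ y ^ n * coeff n (esymmSeries ψ) := by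
    rw [← coeff_rescale, ← esymmSeries_const_mul_comp_equiv (ψ y) ψ (Equiv.addLeft (-y))]
    simp [← AddChar.map_add_eq_mul]
  exact eq_zero_of_mul_eq_self_left (by rwa [AddChar.pow_apply] at hy) translate.symm

lemma addChar_sum_eq_prod {A ι : Type*} [AddCommMonoid A] (ψ : AddChar A R) (S : Finset ι)
    (f : ι → A) : ψ (∑ x ∈ S, f x) = ∏ x ∈ S, ψ (f x) :=
  map_prod ψ.toMonoidHom (fun x => Multiplicative.ofAdd (f x)) S

lemma card_sq_mul_card_filter_sum_eq_zero [IsDomain R] {F ι : Type*} [CommRing F] [Fintype F]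
    [DecidableEq F] [Fintype ι] {ψ : AddChar F R} (hψ : ψ.IsPrimitive) (g h : ι → F) (n : ℕ) :
    (Fintype.card F : R) ^ 2 *
        #{S ∈ powersetCard n univ | ∑ x ∈ S, g x = 0 ∧ ∑ x ∈ S, h x = 0} =
      ∑ a, ∑ b, coeff n (esymmSeries fun x => ψ (a * h x + b * g x)) := by
  have orthogonality (S : Finset ι) : ∑ a, ∑ b, ∏ x ∈ S, ψ (a * h x + b * g x) =
      if ∑ x ∈ S, g x = 0 ∧ ∑ x ∈ S, h x = 0 then (Fintype.card F : R) ^ 2 else 0 := by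
    have factor (a b : F) : ∏ x ∈ S, ψ (a * h x + b * g x) =
        ψ (a * ∑ x ∈ S, h x) * ψ (b * ∑ x ∈ S, g x) := by
      rw [← addChar_sum_eq_prod, sum_add_distrib, ← mul_sum, ← mul_sum, AddChar.map_add_eq_mul]
    simp only [factor, ← mul_sum, ← sum_mul, AddChar.sum_mulShift _ hψ]
    split_ifs <;> simp_all [sq]
  simp only [coeff_esymmSeries]
  rw [sum_congr rfl fun a _ => sum_comm, sum_comm, sum_congr rfl fun S _ => orthogonality S,
    ← sum_filter, sum_const, nsmul_eq_mul, mul_comm]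

end AdditiveCharacters

section QuadraticCharacter

variable {F R : Type*} [Field F] [Fintype F] [DecidableEq F] [CommRing R]

variable (F R) in
/-- The quadratic character of `F` with values in `R`. -/
def quadraticCharIn : MulChar F R :=
  (quadraticChar F).ringHomComp (Int.castRingHom R)

@[simp]
lemma quadraticCharIn_apply (a : F) : quadraticCharIn F R a = quadraticChar F a := rfl

lemma quadraticCharIn_isQuadratic : (quadraticCharIn F R).IsQuadratic :=
  (quadraticChar_isQuadratic F).comp _

lemma gaussSum_quadraticCharIn_sq [IsDomain R] [CharZero R] (hF : ringChar F ≠ 2)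
    {ψ : AddChar F R} (hψ : ψ.IsPrimitive) :
    gaussSum (quadraticCharIn F R) ψ ^ 2 = quadraticChar F (-1) * Fintype.card F := by
  refine gaussSum_sq ?_ quadraticCharIn_isQuadratic hψ
  exact (MulChar.ringHomComp_ne_one_iff (Int.castRingHom R).injective_int).2
    (quadraticChar_ne_one hF)

lemma sum_addChar_sq [IsDomain R] (hF : ringChar F ≠ 2) {φ : AddChar F R} (hφ : φ ≠ 1) :
    ∑ x, φ (x ^ 2) = gaussSum (quadraticCharIn F R) φ := by
  have card_sqrts (y : F) : (#{x : F | x ^ 2 = y} : R) = quadraticChar F y + 1 := by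
    rw [← Int.cast_one, ← Int.cast_add, ← quadraticChar_card_sqrts hF, Set.toFinset_ofPred,
      Int.cast_natCast]
  rw [← sum_fiberwise' univ (fun x : F => x ^ 2) φ]
  simp only [sum_const, nsmul_eq_mul, card_sqrts, add_mul, one_mul, sum_add_distrib,
    AddChar.sum_eq_zero_of_ne_one hφ, add_zero, gaussSum, quadraticCharIn_apply]

lemma sum_addChar_mul_sq [IsDomain R] (hF : ringChar F ≠ 2) {ψ : AddChar F R}
    (hψ : ψ.IsPrimitive) {a : F} (ha : a ≠ 0) :
    ∑ x, ψ (a * x ^ 2) = quadraticChar F a * gaussSum (quadraticCharIn F R) ψ := by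
  simpa [quadraticCharIn_isQuadratic.inv] using (sum_addChar_sq hF (hψ ha)).trans
    (gaussSum_mulShift_eq (quadraticCharIn F R) ψ (Units.mk0 a ha))

lemma two_mul_sum_comp_quadraticChar (hF : ringChar F ≠ 2) (f : ℤ → R) :
    2 * ∑ a, f (quadraticChar F a) = 2 * f 0 + (Fintype.card F - 1) * (f 1 + f (-1)) := by
  have interpolate {a : F} (ha : a ∈ univ.erase 0) : 2 * f (quadraticChar F a) =
      (f 1 + f (-1)) + quadraticChar F a * (f 1 - f (-1)) := by
    rcases quadraticChar_dichotomy (ne_of_mem_erase ha) with h | h <;> rw [h] <;> push_cast <;> ring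
  have sum_erase : ∑ a ∈ univ.erase (0 : F), (quadraticChar F a : R) = 0 := by
    rw [Finset.sum_erase univ (by simp), ← Int.cast_sum, quadraticChar_sum_zero hF, Int.cast_zero]
  rw [← add_sum_erase _ _ (mem_univ 0), quadraticChar_zero, mul_add, mul_sum,
    sum_congr rfl fun a => interpolate, sum_add_distrib, ← sum_mul, sum_erase, zero_mul, add_zero,
    sum_const, card_erase_of_mem (mem_univ 0), card_univ, nsmul_eq_mul,
    Nat.cast_sub Fintype.card_pos, Nat.cast_one]

end QuadraticCharacter

section Counting

variable {F R : Type*} [Field F] [Fintype F] [CommRing R]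

lemma coeff_esymmSeries_quadratic (hF : ringChar F ≠ 2) (ψ : AddChar F R) {a : F} (ha : a ≠ 0)
    (b : F) (n : ℕ) :
    coeff n (esymmSeries fun x => ψ (a * x ^ 2 + b * x)) =
      ψ (-n / (4 * a) * b ^ 2) * coeff n (esymmSeries fun x => ψ (a * x ^ 2)) := by
  have h2 : (2 : F) ≠ 0 := Ring.two_ne_zero hF
  have h4 : (4 : F) = 2 ^ 2 := by norm_num
  have complete_square (x : F) :
      a * x ^ 2 + b * x = -b ^ 2 / (4 * a) + a * (Equiv.addRight (b / (2 * a)) x) ^ 2 := by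
    rw [Equiv.coe_addRight, h4]
    field_simp
    ring
  simp only [complete_square, AddChar.map_add_eq_mul]
  rw [esymmSeries_const_mul_comp_equiv _ (fun x => ψ (a * x ^ 2)), coeff_rescale,
    ← AddChar.map_nsmul_eq_pow, nsmul_eq_mul]
  congr 2
  ring

lemma sum_coeff_esymmSeries_linear [IsDomain R] {ψ : AddChar F R} (hψ : ψ.IsPrimitive) {n : ℕ}
    (hn : (n : F) ≠ 0) :
    ∑ b, coeff n (esymmSeries fun x => ψ (b * x)) = (Fintype.card F).choose n := by
  have vanish (b : F) (hb : b ≠ 0) : coeff n (esymmSeries fun x => ψ (b * x)) = 0 := by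
    refine coeff_esymmSeries_addChar_eq_zero (ψ := ψ.mulShift b) ?_
    rw [AddChar.pow_mulShift, AddChar.mulShift_mulShift]
    exact hψ (mul_ne_zero hb hn)
  rw [Fintype.sum_eq_single 0 vanish]
  simp [esymmSeries_one, coeff_one_add_X_pow]

variable [DecidableEq F]

lemma sum_coeff_esymmSeries_quadratic [IsDomain R] (hF : ringChar F ≠ 2) {ψ : AddChar F R}
    (hψ : ψ.IsPrimitive) {n : ℕ} (hn : (n : F) ≠ 0) {a : F} (ha : a ≠ 0) :
    ∑ b, coeff n (esymmSeries fun x => ψ (a * x ^ 2 + b * x)) =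
      quadraticChar F (-n) * (quadraticChar F a * gaussSum (quadraticCharIn F R) ψ *
        coeff n (esymmSeries fun x => ψ (a * x ^ 2))) := by
  have h2 : (2 : F) ≠ 0 := Ring.two_ne_zero hF
  have h4 : (4 : F) = 2 ^ 2 := by norm_num
  have hc : -n / (4 * a) ≠ 0 :=
    div_ne_zero (neg_ne_zero.2 hn) (mul_ne_zero (h4 ▸ pow_ne_zero 2 h2) ha)
  have hχ : quadraticChar F (-n / (4 * a)) = quadraticChar F (-n) * quadraticChar F a := by
    rw [show -n / (4 * a) = -n * a * (2 * a)⁻¹ ^ 2 by rw [h4]; field_simp, map_mul, map_mul,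
      quadraticChar_sq_one' (inv_ne_zero (mul_ne_zero h2 ha)), mul_one]
  simp only [coeff_esymmSeries_quadratic hF ψ ha]
  rw [← sum_mul, sum_addChar_mul_sq hF hψ hc, hχ, Int.cast_mul]
  ring

theorem card_sq_mul_card_subsets_eq [IsDomain R] (hF : ringChar F ≠ 2) {ψ : AddChar F R}
    (hψ : ψ.IsPrimitive) {n : ℕ} (hn : (n : F) ≠ 0) :
    (Fintype.card F : R) ^ 2 *
        #{S ∈ powersetCard n (univ : Finset F) | ∑ x ∈ S, x = 0 ∧ ∑ x ∈ S, x ^ 2 = 0} =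
      (Fintype.card F).choose n + quadraticChar F (-n) *
        ∑ a, quadraticChar F a * gaussSum (quadraticCharIn F R) ψ *
          coeff n (esymmSeries fun x => ψ (a * x ^ 2)) := by
  rw [card_sq_mul_card_filter_sum_eq_zero hψ (fun x => x) (fun x => x ^ 2),
    ← add_sum_erase _ _ (mem_univ 0),
    sum_congr rfl fun a ha => sum_coeff_esymmSeries_quadratic hF hψ hn (ne_of_mem_erase ha),
    ← mul_sum, Finset.sum_erase univ (by simp)]
  simp only [zero_mul, zero_add, sum_coeff_esymmSeries_linear hψ hn]

end Counting

section EvenPowerOfPrime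

lemma ringChar_ne_two_of_odd {F : Type*} [NonAssocSemiring F] {p : ℕ} [CharP F p] (hp : Odd p) :
    ringChar F ≠ 2 := by
  rw [ringChar.eq F p]
  rintro rfl
  exact absurd hp (by decide)

variable {F K : Type*} [Field F] [Fintype F] [DecidableEq F] [Field K] [CharZero K] {p e : ℕ}

lemma quadraticChar_intCast [Fact p.Prime] (hF : ringChar F ≠ 2)
    (hcard : Fintype.card F = p ^ (2 * e)) {m : ℤ} (hm : (m : F) ≠ 0) :
    quadraticChar F m = 1 := by
  have : CharP F p := charP_of_card_eq_prime_pow hcard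
  have hFrobenius : (m : F) ^ p ^ e = m := by rw [← iterateFrobenius_def, map_intCast]
  have hodd : Odd (p ^ e) := by
    rw [← Nat.odd_pow_iff two_ne_zero, ← pow_mul', ← hcard]
    exact Nat.odd_iff.2 (FiniteField.odd_card_of_char_ne_two hF)
  obtain ⟨r, hr⟩ := hodd
  have hpow : (m : F) ^ (2 * r) = 1 :=
    mul_right_cancel₀ hm (by rw [← pow_succ, ← hr, hFrobenius, one_mul])
  have hhalf : Fintype.card F / 2 = 2 * r * (r + 1) := by
    rw [hcard, pow_mul', hr, show (2 * r + 1) ^ 2 = 2 * (2 * r * (r + 1)) + 1 by ring]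
    omega
  rw [quadraticChar_eq_pow_of_char_ne_two hF hm, hhalf, pow_mul, hpow, one_pow, if_pos rfl]

lemma exists_intCast_eq_gaussSum_quadraticCharIn [Fact p.Prime] (hF : ringChar F ≠ 2)
    (hcard : Fintype.card F = p ^ (2 * e)) {ψ : AddChar F K} (hψ : ψ.IsPrimitive) :
    ∃ g : ℤ, (g = p ^ e ∨ g = -p ^ e) ∧ gaussSum (quadraticCharIn F K) ψ = g := by
  have hχ : quadraticChar F (-1) = 1 := by
    simpa using quadraticChar_intCast hF hcard (m := -1) (by simp)
  have hsq : gaussSum (quadraticCharIn F K) ψ ^ 2 = ((p : K) ^ e) ^ 2 := by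
    rw [gaussSum_quadraticCharIn_sq hF hψ, hχ, hcard]
    push_cast
    ring
  rcases sq_eq_sq_iff_eq_or_eq_neg.1 hsq with h | h
  · exact ⟨p ^ e, .inl rfl, by simpa using h⟩
  · exact ⟨-p ^ e, .inr rfl, by simpa using h⟩

lemma coeff_esymmSeries_addChar_mul_sq (hp : p.Prime) (hodd : Odd p) [CharP F p] {ζ : K}
    (hζ : IsPrimitiveRoot ζ p) {ψ : AddChar F K} (hψ : ψ.IsPrimitive) {g : ℤ}
    (hg : gaussSum (quadraticCharIn F K) ψ = g) {a : F} (ha : a ≠ 0) (n : ℕ) :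
    coeff n (esymmSeries fun x => ψ (a * x ^ 2)) =
      rootsEsymm p (Fintype.card F) n (quadraticChar F a * g) := by
  refine coeff_esymmSeries_of_pow_eq_one hp hodd hζ (fun x => ?_) ?_ n
  · rw [← AddChar.map_nsmul_eq_pow, nsmul_eq_mul, CharP.cast_eq_zero, zero_mul,
      AddChar.map_zero_eq_one]
  · rw [sum_addChar_mul_sq (ringChar_ne_two_of_odd hodd) hψ ha, hg, Int.cast_mul]

lemma exists_addChar_complex_isPrimitive (F : Type*) [Field F] [Finite F] :
    ∃ ψ : AddChar F ℂ, ψ.IsPrimitive := by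
  obtain ⟨ψ, hψ⟩ := AddChar.exists_apply_ne_zero.2 (one_ne_zero (α := F))
  exact ⟨ψ, AddChar.IsPrimitive.of_ne_one (AddChar.ne_one_iff.2 ⟨1, hψ⟩)⟩

theorem two_mul_card_sq_mul_card_subsets_eq (hp : p.Prime) (hodd : Odd p)
    (hcard : Fintype.card F = p ^ (2 * e)) {n : ℕ} (hn : ¬ p ∣ n) :
    (2 * (p ^ (2 * e)) ^ 2 *
        #{S ∈ powersetCard n (univ : Finset F) | ∑ x ∈ S, x = 0 ∧ ∑ x ∈ S, x ^ 2 = 0} : ℤ) =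
      2 * (p ^ (2 * e)).choose n + (p ^ (2 * e) - 1) *
        (p ^ e * (rootsEsymm p (p ^ (2 * e)) n (p ^ e) -
          rootsEsymm p (p ^ (2 * e)) n (-p ^ e))) := by
  have : Fact p.Prime := ⟨hp⟩
  have : CharP F p := charP_of_card_eq_prime_pow hcard
  have hF : ringChar F ≠ 2 := ringChar_ne_two_of_odd hodd
  have hnF : (n : F) ≠ 0 := by rwa [Ne, CharP.cast_eq_zero_iff F p]
  have hχn : quadraticChar F (-n) = 1 := by
    simpa using quadraticChar_intCast hF hcard (m := -n) (by simpa using hnF)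
  obtain ⟨ψ, hψ⟩ := exists_addChar_complex_isPrimitive F
  obtain ⟨g, hg, hgauss⟩ := exists_intCast_eq_gaussSum_quadraticCharIn hF hcard hψ
  let f (ε : ℤ) : ℂ := ε * g * rootsEsymm p (Fintype.card F) n (ε * g)
  have hterm (a : F) : quadraticChar F a * gaussSum (quadraticCharIn F ℂ) ψ *
      coeff n (esymmSeries fun x => ψ (a * x ^ 2)) = f (quadraticChar F a) := by
    rcases eq_or_ne a 0 with rfl | ha
    · simp [f]
    · rw [coeff_esymmSeries_addChar_mul_sq hp hodd (Complex.isPrimitiveRoot_exp p hp.ne_zero) hψ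
        hgauss ha, hgauss]
  have hf_zero : f 0 = 0 := by simp [f]
  have hf_symm : f 1 + f (-1) = p ^ e * (rootsEsymm p (Fintype.card F) n (p ^ e) -
      rootsEsymm p (Fintype.card F) n (-p ^ e)) := by
    rcases hg with rfl | rfl <;> simp [f] <;> ring
  have hcount := card_sq_mul_card_subsets_eq hF hψ hnF
  rw [hχn, Int.cast_one, one_mul, sum_congr rfl fun a _ => hterm a] at hcount
  have hsum := two_mul_sum_comp_quadraticChar hF f
  rw [hf_zero, hf_symm] at hsum
  rw [← Int.cast_inj (α := ℂ)]
  rw [hcard] at hcount hsum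
  push_cast at hcount hsum ⊢
  linear_combination 2 * hcount + hsum

end EvenPowerOfPrime

theorem stmt_17 (p e q s n : ℕ) (hp : p.Prime) (hodd : Odd p) (he : 0 < e)
    (hq : q = p ^ (2 * e)) (hs : s = p ^ e)
    (F : Type*) [Field F] [Fintype F] (hF : Fintype.card F = q)
    (hn1 : 1 ≤ n) (hnq : n ≤ q) (hpn : ¬ p ∣ n) :
    (Nat.card {S : Finset F //
        S.card = n ∧ (∑ x ∈ S, x) = 0 ∧ (∑ x ∈ S, x ^ 2) = 0} : ℚ)
      = (1 / (q : ℚ) ^ 2) * (q.choose n)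
        + (((q : ℚ) - 1) / (2 * (s : ℚ) ^ 3)) *
          ((∑ ij ∈ (Finset.range (n + 1) ×ˢ Finset.range (n + 1)).filter
              (fun ij => ij.1 + p * ij.2 = n ∧ ij.1 ≤ s),
            ((s.choose ij.1 : ℚ) * (((q - s) / p).choose ij.2 : ℚ)))
          - (-1 : ℚ) ^ n *
            ∑ ij ∈ (Finset.range (n + 1) ×ˢ Finset.range (n + 1)).filter
                (fun ij => ij.1 + p * ij.2 = n),
              (-1 : ℚ) ^ ij.2 * ((s - 1 + ij.1).choose (s - 1) : ℚ)
                * (((q + s) / p).choose ij.2 : ℚ)) := by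
  classical
  subst hq hs
  have hcard : Nat.card {S : Finset F // S.card = n ∧ (∑ x ∈ S, x) = 0 ∧ (∑ x ∈ S, x ^ 2) = 0} =
      #{S ∈ powersetCard n (univ : Finset F) | ∑ x ∈ S, x = 0 ∧ ∑ x ∈ S, x ^ 2 = 0} := by
    rw [Nat.card_eq_fintype_card, Fintype.card_subtype, powersetCard_eq_filter, filter_filter]
    simp
  have hcount := two_mul_card_sq_mul_card_subsets_eq hp hodd hF hpn
  have hs : p ^ e ≤ p ^ (2 * e) := Nat.pow_le_pow_right hp.pos (by omega)
  rw [← Nat.cast_pow p e, rootsEsymm_natCast hp.ne_zero hs,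
    rootsEsymm_neg_natCast hodd (pow_pos hp.pos e), ← hcard] at hcount
  have hcountQ := congrArg (Int.cast : ℤ → ℚ) hcount
  have hp0 : (p : ℚ) ≠ 0 := mod_cast hp.ne_zero
  push_cast at hcountQ ⊢
  field_simp
  linear_combination (p : ℚ) ^ (3 * e) * hcountQ
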